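/- arXiv:1302.3453 — 2 statements merged into one kernel-verified Lean document; each statement's English description precedes it below -/
import Mathlib

section
/- Fix a positive integer m and integers s₁, s₂ coprime to m. For every positive integer h: if h ≢ s₁ + s₂ (mod m) then 𝔖_{s₁s₂}(h) = 0, and if h ≡ s₁ + s₂ (mod m) then 𝔖_{s₁s₂}(h) = (m/φ(m)²) · ∏_{p prime, p ∤ h, p ∤ m} (1 − 1/(p−1)²) · ∏_{p prime, p | h, p ∤ m} (1 + 1/(p−1)). Moreover, if m is even then there is a constant c > 0 depending only on m such that 𝔖_S(h) ≥ c for every even positive integer h with h ≡ s₁ + s₂ (mod m). -/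
open scoped BigOperators

/-- `e(x) = exp(2πix)`. -/
noncomputable def eC (x : ℝ) : ℂ := Complex.exp (2 * Real.pi * Complex.I * x)

/-- `f_s(α) = ∑_{p ≤ c₁N, p prime, p ≡ s (mod m)} (log p)·e(αp)`. -/
noncomputable def fsum (m : ℕ) (s : ℤ) (c₁ : ℝ) (N : ℕ) (α : ℝ) : ℂ :=
  ∑ p ∈ (Finset.range (⌊c₁ * (N : ℝ)⌋₊ + 1)).filter
      (fun p => Nat.Prime p ∧ (p : ℤ) ≡ s [ZMOD (m : ℤ)]),
    (Real.log p : ℂ) * eC (α * p)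

/-- `R_S(h) = ∫₀¹ (f_{s₁}(α) + f_{s₂}(α))² e(-αh) dα`. -/
noncomputable def RS (m : ℕ) (s₁ s₂ : ℤ) (c₁ : ℝ) (N : ℕ) (h : ℤ) : ℂ :=
  ∫ α in (0:ℝ)..1, (fsum m s₁ c₁ N α + fsum m s₂ c₁ N α) ^ 2 * eC (-(α * (h : ℝ)))

/-- `μ_s(q, a) = ∑_{1 ≤ r ≤ q, gcd(r,q)=1, r ≡ s (mod d)} e(ar/q)` where `d = gcd(q, m)`. -/
noncomputable def muS (m : ℕ) (s : ℤ) (q a : ℕ) : ℂ :=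
  ∑ r ∈ (Finset.Icc 1 q).filter
      (fun r => Nat.Coprime r q ∧ (r : ℤ) ≡ s [ZMOD (Nat.gcd q m : ℤ)]),
    eC (((a * r : ℕ) : ℝ) / (q : ℝ))

/-- The `q`-th term of the singular series,
`∑_{1 ≤ a ≤ q, gcd(a,q)=1} μ_{s₁}(q,a)μ_{s₂}(q,a)e(-ah/q)/φ(q₀m)²`, with `q₀ = q/gcd(q,m)`. -/
noncomputable def singTerm (m : ℕ) (s₁ s₂ : ℤ) (h : ℤ) (q : ℕ) : ℂ :=
  ∑ a ∈ (Finset.Icc 1 q).filter (fun a => Nat.Coprime a q),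
    muS m s₁ q a * muS m s₂ q a * eC (-((a : ℝ) * (h : ℝ)) / (q : ℝ)) /
      (Nat.totient ((q / Nat.gcd q m) * m) : ℂ) ^ 2

/-- The singular series `𝔖_{s₁s₂}(h)`. -/
noncomputable def singSeries (m : ℕ) (s₁ s₂ : ℤ) (h : ℤ) : ℂ :=
  ∑' q : ℕ, singTerm m s₁ s₂ h q

/-- `𝔖_S(h) = 𝔖_{s₁s₁}(h) + 2𝔖_{s₁s₂}(h) + 𝔖_{s₂s₂}(h)`. -/
noncomputable def singS (m : ℕ) (s₁ s₂ : ℤ) (h : ℤ) : ℂ :=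
  singSeries m s₁ s₁ h + 2 * singSeries m s₁ s₂ h + singSeries m s₂ s₂ h

open ArithmeticFunction in
/-- gcd-indicator arithmetic function -/
def ssG (n : ℤ) : ArithmeticFunction ℤ := ⟨fun q => if (q : ℤ) ∣ n then (q : ℤ) else 0, by simp⟩

open ArithmeticFunction in
/-- Ramanujan sum -/
def ssC (n : ℤ) : ArithmeticFunction ℤ := moebius * ssG n

lemma ssG_apply (n : ℤ) (q : ℕ) : ssG n q = if (q : ℤ) ∣ n then (q : ℤ) else 0 := rfl

lemma ssG_mult (n : ℤ) : (ssG n).IsMultiplicative := by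
  constructor
  · simp [ssG_apply]
  · intro a b hab
    simp only [ssG_apply]
    have : ((a * b : ℕ) : ℤ) ∣ n ↔ (a : ℤ) ∣ n ∧ (b : ℤ) ∣ n := by
      push_cast
      constructor
      · intro h
        exact ⟨(dvd_mul_right _ _).trans h, (dvd_mul_left _ _).trans h⟩
      · rintro ⟨h1, h2⟩
        exact IsCoprime.mul_dvd (Nat.isCoprime_iff_coprime.mpr hab) h1 h2
    rw [if_congr this rfl rfl]
    by_cases h1 : (a : ℤ) ∣ n <;> by_cases h2 : (b : ℤ) ∣ n <;> simp [h1, h2]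

lemma ssC_mult (n : ℤ) : (ssC n).IsMultiplicative :=
  ArithmeticFunction.isMultiplicative_moebius.mul (ssG_mult n)

lemma ssC_congr {n n' : ℤ} {q : ℕ} (h : (q : ℤ) ∣ n - n') : ssC n q = ssC n' q := by
  simp only [ssC, ArithmeticFunction.mul_apply]
  apply Finset.sum_congr rfl
  intro x hx
  have hx2 : (x.2 : ℤ) ∣ n - n' := by
    have := (Nat.mem_divisorsAntidiagonal.mp hx).1
    exact (Int.natCast_dvd_natCast.mpr ⟨x.1, by rw [← this, mul_comm]⟩).trans h
  have : (x.2 : ℤ) ∣ n ↔ (x.2 : ℤ) ∣ n' := by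
    constructor
    · intro h3; simpa using dvd_sub h3 hx2
    · intro h3; simpa using dvd_add h3 hx2
  simp only [ssG_apply, this]

lemma ssC_sum (n : ℤ) (q : ℕ) : ∑ k ∈ q.divisors, ssC n k = ssG n q := by
  rw [← ArithmeticFunction.coe_zeta_mul_apply, ssC, ← mul_assoc,
    ArithmeticFunction.coe_zeta_mul_moebius, one_mul]

lemma ssC_prime_pow (n : ℤ) {p : ℕ} (hp : p.Prime) (k : ℕ) :
    ssC n (p ^ (k + 1)) = ssG n (p ^ (k + 1)) - ssG n (p ^ k) := by
  rw [← ssC_sum, ← ssC_sum, Nat.sum_divisors_prime_pow hp, Nat.sum_divisors_prime_pow hp,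
    Finset.sum_range_succ _ (k + 1)]
  ring

lemma ssE_add (x y : ℝ) : eC (x + y) = eC x * eC y := by
  simp only [eC]; rw [← Complex.exp_add]; push_cast; ring_nf

lemma ssE_nat_mul (a : ℕ) (x : ℝ) : eC (a * x) = eC x ^ a := by
  simp only [eC]; rw [← Complex.exp_nat_mul]; push_cast; ring_nf

lemma ssE_eq_one (x : ℝ) : eC x = 1 ↔ ∃ n : ℤ, x = n := by
  simp only [eC]
  rw [Complex.exp_eq_one_iff]
  apply exists_congr
  intro n
  have : (2 * Real.pi * Complex.I : ℂ) ≠ 0 := by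
    simp [Real.pi_ne_zero]
  rw [mul_comm, mul_left_inj' this]
  exact_mod_cast Iff.rfl

lemma ssE_full (n : ℤ) (q : ℕ) (hq : 0 < q) :
    ∑ a ∈ Finset.Icc 1 q, eC ((a : ℝ) * (n / q)) = ((ssG n q : ℤ) : ℂ) := by
  have hq' : (q : ℝ) ≠ 0 := by positivity
  have h1 : eC ((n : ℝ) / q) = 1 ↔ (q : ℤ) ∣ n := by
    rw [ssE_eq_one]
    apply exists_congr
    intro k
    rw [div_eq_iff hq', mul_comm]
    exact_mod_cast Iff.rfl
  have h2 : eC ((n : ℝ) / q) ^ q = 1 := by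
    rw [← ssE_nat_mul, ssE_eq_one]
    exact ⟨n, by field_simp⟩
  simp only [ssE_nat_mul, ssG_apply]
  have h3 : ∑ a ∈ Finset.Icc 1 q, eC ((n : ℝ) / q) ^ a
      = ∑ a ∈ Finset.range q, eC ((n : ℝ) / q) ^ a * eC ((n : ℝ) / q) := by
    rw [Finset.range_eq_Ico, Finset.sum_Ico_eq_sum_range, ← Finset.Ico_add_one_right_eq_Icc, Finset.sum_Ico_eq_sum_range]
    apply Finset.sum_congr (by simp)
    intro a _
    rw [zero_add, pow_add, pow_one, mul_comm]
  rw [h3, ← Finset.sum_mul]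
  by_cases h : (q : ℤ) ∣ n
  · rw [if_pos h, h1.mpr h]; simp
  · rw [if_neg h, geom_sum_eq (fun h' => h (h1.mp h')), h2]; simp

lemma ssE_split (f : ℝ → ℂ) (q : ℕ) (hq : 0 < q) :
    ∑ k ∈ q.divisors, ∑ a ∈ (Finset.Icc 1 k).filter (fun a => Nat.Coprime a k), f ((a : ℝ) / k)
      = ∑ a ∈ Finset.Icc 1 q, f ((a : ℝ) / q) := by
  rw [Finset.sum_sigma']
  refine Finset.sum_bij' (fun x _ => x.2 * (q / x.1))
    (fun a _ => ⟨q / Nat.gcd a q, a / Nat.gcd a q⟩) ?_ ?_ ?_ ?_ ?_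
  · rintro ⟨k, a⟩ h
    simp only [Finset.mem_sigma, Nat.mem_divisors, Finset.mem_filter, Finset.mem_Icc] at h ⊢
    obtain ⟨⟨⟨c, rfl⟩, _⟩, ⟨h1, h2⟩, h3⟩ := h
    have hk : 0 < k := by omega
    have hc : 0 < c := Nat.pos_of_mul_pos_left hq |> fun h => by
      rcases Nat.eq_zero_or_pos c with rfl | h'
      · simp at hq
      · exact h'
    rw [Nat.mul_div_cancel_left _ hk]
    exact ⟨Nat.mul_pos h1 hc, Nat.mul_le_mul_right _ h2⟩
  · intro a h
    simp only [Finset.mem_sigma, Nat.mem_divisors, Finset.mem_filter, Finset.mem_Icc] at h ⊢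
    have hg : 0 < Nat.gcd a q := Nat.gcd_pos_of_pos_right _ hq
    refine ⟨⟨Nat.div_dvd_of_dvd (Nat.gcd_dvd_right _ _), hq.ne'⟩, ⟨?_, ?_⟩, ?_⟩
    · exact Nat.div_pos (Nat.le_of_dvd h.1 (Nat.gcd_dvd_left _ _)) hg
    · exact Nat.div_le_div_right h.2
    · exact Nat.coprime_div_gcd_div_gcd hg
  · rintro ⟨k, a⟩ h
    simp only [Finset.mem_sigma, Nat.mem_divisors, Finset.mem_filter, Finset.mem_Icc] at h ⊢
    obtain ⟨⟨⟨c, rfl⟩, _⟩, ⟨h1, h2⟩, h3⟩ := h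
    have hk : 0 < k := by omega
    have hc : 0 < c := by
      rcases Nat.eq_zero_or_pos c with rfl | h'
      · simp at hq
      · exact h'
    rw [Nat.mul_div_cancel_left _ hk, Nat.gcd_mul_right, h3, one_mul,
      Nat.mul_div_cancel _ hc, Nat.mul_div_cancel _ hc]
  · intro a h
    simp only [Finset.mem_Icc] at h
    have hg : 0 < Nat.gcd a q := Nat.gcd_pos_of_pos_right _ hq
    simp only
    rw [Nat.div_div_self (Nat.gcd_dvd_right _ _) hq.ne', Nat.div_mul_cancel (Nat.gcd_dvd_left _ _)]
  · rintro ⟨k, a⟩ h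
    simp only [Finset.mem_sigma, Nat.mem_divisors, Finset.mem_filter, Finset.mem_Icc] at h ⊢
    obtain ⟨⟨⟨c, rfl⟩, _⟩, ⟨h1, h2⟩, h3⟩ := h
    have hk : 0 < k := by omega
    have hc : 0 < c := by
      rcases Nat.eq_zero_or_pos c with rfl | h'
      · simp at hq
      · exact h'
    rw [Nat.mul_div_cancel_left _ hk]
    congr 1
    push_cast
    have : (k : ℝ) ≠ 0 := by positivity
    have : (c : ℝ) ≠ 0 := by positivity
    field_simp

lemma ssE_ramanujan (n : ℤ) (q : ℕ) (hq : 0 < q) :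
    ∑ a ∈ (Finset.Icc 1 q).filter (fun a => Nat.Coprime a q), eC ((a : ℝ) / q * n)
      = ((ssC n q : ℤ) : ℂ) := by
  have := (ArithmeticFunction.sum_eq_iff_sum_mul_moebius_eq (R := ℂ)
    (f := fun q => ∑ a ∈ (Finset.Icc 1 q).filter (fun a => Nat.Coprime a q), eC ((a : ℝ) / q * n))
    (g := fun q => ((ssG n q : ℤ) : ℂ))).mp ?_ q hq
  · rw [← this, ssC, ArithmeticFunction.mul_apply]
    push_cast
    rfl
  · intro k hk
    rw [ssE_split (fun x => eC (x * n)) k hk, ← ssE_full n k hk]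
    apply Finset.sum_congr rfl
    intro a _
    congr 1
    ring

/-- residues -/
def ssR (m : ℕ) (s : ℤ) (q : ℕ) : Finset ℕ :=
  (Finset.range q).filter (fun r => Nat.Coprime r q ∧ (r : ℤ) ≡ s [ZMOD (Nat.gcd q m : ℤ)])

/-- double sum -/
def ssT (m : ℕ) (s₁ s₂ h : ℤ) (q : ℕ) : ℤ :=
  ∑ r₁ ∈ ssR m s₁ q, ∑ r₂ ∈ ssR m s₂ q, ssC (r₁ + r₂ - h) q

/-- normalized term -/
noncomputable def ssF (m : ℕ) (s₁ s₂ h : ℤ) (q : ℕ) : ℝ :=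
  ((Nat.totient (Nat.gcd q m) : ℝ) / Nat.totient q) ^ 2 * (ssT m s₁ s₂ h q : ℝ)

lemma ss_Icc_range {M : Type*} [AddCommMonoid M] (q : ℕ) (f : ℕ → M) (hf : f q = f 0) :
    ∑ r ∈ Finset.Icc 1 q, f r = ∑ r ∈ Finset.range q, f r := by
  rcases q with _ | q
  · simp
  · rw [Finset.sum_range_succ', ← Finset.Ico_add_one_right_eq_Icc, Finset.sum_Ico_eq_sum_range, ← hf]
    simp only [Nat.add_sub_cancel]
    rw [Finset.sum_range_succ]
    congr 1
    · exact Finset.sum_congr rfl fun a _ => by rw [add_comm]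
    · rw [add_comm]

lemma ss_muS (m : ℕ) (s : ℤ) (q a : ℕ) (hq : 0 < q) :
    muS m s q a = ∑ r ∈ ssR m s q, eC ((a : ℝ) / q * r) := by
  unfold muS ssR
  rw [Finset.sum_filter, Finset.sum_filter, ss_Icc_range]
  · apply Finset.sum_congr rfl
    intro r _
    congr 2
    push_cast
    ring
  · have hq' : (q : ℝ) ≠ 0 := by positivity
    have h1 : Nat.Coprime q q ↔ Nat.Coprime 0 q := by simp
    have h2 : ((q : ℕ) : ℤ) ≡ s [ZMOD (Nat.gcd q m : ℤ)] ↔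
        ((0 : ℕ) : ℤ) ≡ s [ZMOD (Nat.gcd q m : ℤ)] := by
      have : ((q : ℕ) : ℤ) ≡ ((0 : ℕ) : ℤ) [ZMOD (Nat.gcd q m : ℤ)] := by
        rw [Nat.cast_zero]
        exact Int.modEq_zero_iff_dvd.mpr (Int.natCast_dvd_natCast.mpr (Nat.gcd_dvd_left _ _))
      exact ⟨fun h => this.symm.trans h, fun h => this.trans h⟩
    have h3 : eC (((a * q : ℕ) : ℝ) / (q : ℝ)) = eC (((a * 0 : ℕ) : ℝ) / (q : ℝ)) := by
      rw [(ssE_eq_one _).mpr ⟨a, by push_cast; field_simp⟩,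
        (ssE_eq_one _).mpr ⟨0, by simp⟩]
    simp only [h1, h2, h3]

lemma ss_tot (m q : ℕ) (hm : 0 < m) (hq : 0 < q) :
    Nat.totient (Nat.gcd q m) * Nat.totient (q / Nat.gcd q m * m) =
      Nat.totient q * Nat.totient m := by
  have hd : 0 < Nat.gcd q m := Nat.gcd_pos_of_pos_right _ hm
  have h1 := Nat.totient_gcd_mul_totient_mul q m
  have h2 := Nat.totient_gcd_mul_totient_mul (Nat.gcd q m) (q / Nat.gcd q m * m)
  have h3 : Nat.gcd (Nat.gcd q m) (q / Nat.gcd q m * m) = Nat.gcd q m :=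
    Nat.gcd_eq_left ((Nat.gcd_dvd_right q m).trans (dvd_mul_left _ _))
  have h4 : Nat.gcd q m * (q / Nat.gcd q m * m) = q * m := by
    rw [← mul_assoc, Nat.mul_div_cancel' (Nat.gcd_dvd_left _ _)]
  rw [h3, h4, h1] at h2
  exact (Nat.eq_of_mul_eq_mul_right hd h2).symm

lemma ss_term (m : ℕ) (hm : 0 < m) (s₁ s₂ h : ℤ) (q : ℕ) :
    singTerm m s₁ s₂ h q = ((ssF m s₁ s₂ h q / (Nat.totient m : ℝ) ^ 2 : ℝ) : ℂ) := by
  rcases Nat.eq_zero_or_pos q with rfl | hq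
  · simp [singTerm, ssF]
  have h1 : ∑ a ∈ (Finset.Icc 1 q).filter (fun a => Nat.Coprime a q),
      muS m s₁ q a * muS m s₂ q a * eC (-((a : ℝ) * (h : ℝ)) / (q : ℝ)) = (ssT m s₁ s₂ h q : ℂ) := by
    unfold ssT
    push_cast
    simp_rw [← ssE_ramanujan _ q hq, ss_muS m _ q _ hq, Finset.sum_mul_sum, Finset.sum_mul]
    rw [Finset.sum_comm]
    apply Finset.sum_congr rfl
    intro r₁ _
    rw [Finset.sum_comm]
    apply Finset.sum_congr rfl
    intro r₂ _
    apply Finset.sum_congr rfl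
    intro a _
    rw [← ssE_add, ← ssE_add]
    congr 1
    push_cast
    ring
  unfold singTerm ssF
  rw [← Finset.sum_div, h1]
  push_cast
  have h2 : ((Nat.totient (Nat.gcd q m) : ℕ) : ℂ) * (Nat.totient (q / Nat.gcd q m * m) : ℕ) =
      (Nat.totient q : ℕ) * (Nat.totient m : ℕ) := by exact_mod_cast ss_tot m q hm hq
  have p1 : (Nat.totient (Nat.gcd q m) : ℂ) ≠ 0 := by
    exact_mod_cast (Nat.totient_pos.mpr (Nat.gcd_pos_of_pos_right _ hm)).ne'
  have p2 : (Nat.totient m : ℂ) ≠ 0 := by exact_mod_cast (Nat.totient_pos.mpr hm).ne'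
  have p3 : (Nat.totient q : ℂ) ≠ 0 := by exact_mod_cast (Nat.totient_pos.mpr hq).ne'
  have p4 : (Nat.totient (q / Nat.gcd q m * m) : ℂ) ≠ 0 := by
    intro h0; rw [h0, mul_zero] at h2; exact mul_ne_zero p3 p2 h2.symm
  rw [div_pow, div_mul_eq_mul_div, div_div, div_eq_div_iff (by positivity) (by positivity)]
  linear_combination (-(ssT m s₁ s₂ h q : ℂ)) * (((Nat.totient (Nat.gcd q m) : ℕ) : ℂ) * (Nat.totient (q / Nat.gcd q m * m) : ℕ) + (Nat.totient q : ℕ) * (Nat.totient m : ℕ)) * h2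

lemma ssF_zero (m : ℕ) (s₁ s₂ h : ℤ) : ssF m s₁ s₂ h 0 = 0 := by simp [ssF]

lemma ssF_one (m : ℕ) (s₁ s₂ h : ℤ) : ssF m s₁ s₂ h 1 = 1 := by
  have : ∀ s, ssR m s 1 = {0} := by
    intro s
    ext r
    simp only [ssR, Finset.mem_filter, Finset.mem_range, Finset.mem_singleton]
    constructor
    · rintro ⟨h, _⟩; omega
    · rintro rfl
      refine ⟨by simp, by simp, by simp [Int.modEq_one]⟩
  simp [ssF, ssT, this, (ssC_mult _).1]

lemma ssR_sum_mul (m : ℕ) (s : ℤ) {a b : ℕ} (hab : Nat.Coprime a b) (ha : 0 < a) (hb : 0 < b)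
    (f : ℕ → ℕ → ℤ) :
    ∑ r ∈ ssR m s (a * b), f (r % a) (r % b) = ∑ x ∈ ssR m s a, ∑ y ∈ ssR m s b, f x y := by
  have hg : Nat.gcd (a * b) m = Nat.gcd a m * Nat.gcd b m := by
    rw [Nat.gcd_comm, Nat.Coprime.gcd_mul _ hab, Nat.gcd_comm, Nat.gcd_comm m b]
  have hcop : IsCoprime ((Nat.gcd a m : ℕ) : ℤ) ((Nat.gcd b m : ℕ) : ℤ) :=
    Nat.isCoprime_iff_coprime.mpr
      (Nat.Coprime.coprime_dvd_left (Nat.gcd_dvd_left _ _)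
        (Nat.Coprime.coprime_dvd_right (Nat.gcd_dvd_left _ _) hab))
  have key : ∀ r : ℕ, (Nat.Coprime r (a * b) ∧ (r : ℤ) ≡ s [ZMOD (Nat.gcd (a * b) m : ℤ)]) ↔
      (Nat.Coprime (r % a) a ∧ ((r % a : ℕ) : ℤ) ≡ s [ZMOD (Nat.gcd a m : ℤ)]) ∧
      (Nat.Coprime (r % b) b ∧ ((r % b : ℕ) : ℤ) ≡ s [ZMOD (Nat.gcd b m : ℤ)]) := by
    intro r
    have e1 : ∀ a : ℕ, Nat.Coprime (r % a) a ↔ Nat.Coprime r a := by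
      intro a
      rw [Nat.coprime_iff_gcd_eq_one, Nat.coprime_iff_gcd_eq_one, ← Nat.gcd_rec, Nat.gcd_comm]
    have e2 : ∀ a : ℕ, ((r % a : ℕ) : ℤ) ≡ s [ZMOD (Nat.gcd a m : ℤ)] ↔
        (r : ℤ) ≡ s [ZMOD (Nat.gcd a m : ℤ)] := by
      intro a
      have : ((r % a : ℕ) : ℤ) ≡ (r : ℤ) [ZMOD (Nat.gcd a m : ℤ)] := by
        push_cast
        exact (Int.mod_modEq (r : ℤ) a).of_dvd (Int.natCast_dvd_natCast.mpr (Nat.gcd_dvd_left _ _))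
      exact ⟨fun h => this.symm.trans h, fun h => this.trans h⟩
    have e3 : (r : ℤ) ≡ s [ZMOD (Nat.gcd (a * b) m : ℤ)] ↔
        (r : ℤ) ≡ s [ZMOD (Nat.gcd a m : ℤ)] ∧ (r : ℤ) ≡ s [ZMOD (Nat.gcd b m : ℤ)] := by
      rw [hg]
      push_cast
      simp only [Int.modEq_iff_dvd]
      constructor
      · intro h
        exact ⟨(dvd_mul_right _ _).trans h, (dvd_mul_left _ _).trans h⟩
      · rintro ⟨h1, h2⟩
        exact hcop.mul_dvd h1 h2
    rw [e1, e1, e2, e2, e3, Nat.coprime_mul_iff_right]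
    tauto
  rw [← Finset.sum_product']
  refine Finset.sum_bij' (fun r _ => (r % a, r % b))
    (fun x _ => (Nat.chineseRemainder hab x.1 x.2 : ℕ)) ?_ ?_ ?_ ?_ ?_
  · intro r hr
    simp only [ssR, Finset.mem_filter, Finset.mem_range, Finset.mem_product] at hr ⊢
    have := (key r).mp hr.2
    exact ⟨⟨Nat.mod_lt _ ha, this.1⟩, ⟨Nat.mod_lt _ hb, this.2⟩⟩
  · rintro ⟨x, y⟩ hx
    simp only [ssR, Finset.mem_filter, Finset.mem_range, Finset.mem_product] at hx ⊢
    have h1 := (Nat.chineseRemainder hab x y).2.1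
    have h2 := (Nat.chineseRemainder hab x y).2.2
    refine ⟨Nat.chineseRemainder_lt_mul hab x y ha.ne' hb.ne', (key _).mpr ?_⟩
    rw [Nat.ModEq, Nat.mod_eq_of_lt hx.1.1] at h1
    rw [Nat.ModEq, Nat.mod_eq_of_lt hx.2.1] at h2
    rw [h1, h2]
    exact ⟨hx.1.2, hx.2.2⟩
  · intro r hr
    simp only [ssR, Finset.mem_filter, Finset.mem_range] at hr
    have h1 := (Nat.chineseRemainder hab (r % a) (r % b)).2.1
    have h2 := (Nat.chineseRemainder hab (r % a) (r % b)).2.2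
    have h3 : (Nat.chineseRemainder hab (r % a) (r % b) : ℕ) ≡ r [MOD a * b] :=
      (Nat.modEq_and_modEq_iff_modEq_mul hab).mp
        ⟨h1.trans (Nat.mod_modEq _ _), h2.trans (Nat.mod_modEq _ _)⟩
    exact Nat.ModEq.eq_of_lt_of_lt h3 (Nat.chineseRemainder_lt_mul hab _ _ ha.ne' hb.ne') hr.1
  · rintro ⟨x, y⟩ hx
    simp only [ssR, Finset.mem_filter, Finset.mem_range, Finset.mem_product] at hx ⊢
    have h1 := (Nat.chineseRemainder hab x y).2.1
    have h2 := (Nat.chineseRemainder hab x y).2.2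
    rw [Nat.ModEq, Nat.mod_eq_of_lt hx.1.1] at h1
    rw [Nat.ModEq, Nat.mod_eq_of_lt hx.2.1] at h2
    rw [h1, h2]
  · intro r hr
    rfl

lemma ssT_mul (m : ℕ) (s₁ s₂ h : ℤ) {a b : ℕ} (hab : Nat.Coprime a b) (ha : 0 < a) (hb : 0 < b) :
    ssT m s₁ s₂ h (a * b) = ssT m s₁ s₂ h a * ssT m s₁ s₂ h b := by
  have e : ∀ r₁ r₂ : ℕ, ssC (r₁ + r₂ - h) (a * b) =
      ssC ((r₁ % a : ℕ) + (r₂ % a : ℕ) - h) a * ssC ((r₁ % b : ℕ) + (r₂ % b : ℕ) - h) b := by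
    intro r₁ r₂
    rw [(ssC_mult _).2 hab]
    have : ∀ c : ℕ, ssC ((r₁ : ℤ) + r₂ - h) c = ssC ((r₁ % c : ℕ) + (r₂ % c : ℕ) - h) c := by
      intro c
      apply ssC_congr
      push_cast
      have h1 : (c : ℤ) ∣ (r₁ : ℤ) - (r₁ : ℤ) % c := Int.dvd_self_sub_emod
      have h2 : (c : ℤ) ∣ (r₂ : ℤ) - (r₂ : ℤ) % c := Int.dvd_self_sub_emod
      have h3 := dvd_add h1 h2
      have h4 : (r₁ : ℤ) - (r₁ : ℤ) % c + ((r₂ : ℤ) - (r₂ : ℤ) % c) =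
        (r₁ : ℤ) + r₂ - h - ((r₁ : ℤ) % c + (r₂ : ℤ) % c - h) := by ring
      rwa [h4] at h3
    rw [this a, this b]
  unfold ssT
  simp_rw [e]
  rw [ssR_sum_mul m s₁ hab ha hb (fun x y => ∑ r₂ ∈ ssR m s₂ (a * b),
     ssC ((x : ℤ) + (r₂ % a : ℕ) - h) a * ssC ((y : ℤ) + (r₂ % b : ℕ) - h) b)]
  rw [Finset.sum_mul_sum]
  apply Finset.sum_congr rfl; intro x _
  apply Finset.sum_congr rfl; intro y _
  rw [ssR_sum_mul m s₂ hab ha hb (fun u v => 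
     ssC ((x : ℤ) + u - h) a * ssC ((y : ℤ) + v - h) b), Finset.sum_mul_sum]

lemma ssF_mul (m : ℕ) (s₁ s₂ h : ℤ) {a b : ℕ} (hab : Nat.Coprime a b) :
    ssF m s₁ s₂ h (a * b) = ssF m s₁ s₂ h a * ssF m s₁ s₂ h b := by
  rcases Nat.eq_zero_or_pos a with rfl | ha
  · simp [ssF_zero]
  rcases Nat.eq_zero_or_pos b with rfl | hb
  · simp [ssF_zero]
  have hg : Nat.gcd (a * b) m = Nat.gcd a m * Nat.gcd b m := by
    rw [Nat.gcd_comm, Nat.Coprime.gcd_mul _ hab, Nat.gcd_comm, Nat.gcd_comm m b]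
  have hcop : Nat.Coprime (Nat.gcd a m) (Nat.gcd b m) :=
      (Nat.Coprime.coprime_dvd_left (Nat.gcd_dvd_left _ _)
        (Nat.Coprime.coprime_dvd_right (Nat.gcd_dvd_left _ _) hab))
  unfold ssF
  rw [ssT_mul m s₁ s₂ h hab ha hb, hg, Nat.totient_mul hcop, Nat.totient_mul hab]
  push_cast
  rw [mul_div_mul_comm]
  ring

lemma ss_range_mul (f : ℕ → ℤ) (Q N : ℕ) :
    ∑ r ∈ Finset.range (Q * N), f r = ∑ v ∈ Finset.range N, ∑ u ∈ Finset.range Q, f (u + Q * v) := by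
  induction N with
  | zero => simp
  | succ N ih =>
    rw [Nat.mul_succ, Finset.sum_range_add, ih, Finset.sum_range_succ]
    congr 1
    exact Finset.sum_congr rfl fun u _ => by rw [add_comm]

lemma ssC_inner (n : ℤ) {p : ℕ} (hp : p.Prime) (k : ℕ) :
    ∑ v ∈ Finset.range p, ssC (n + (p ^ k : ℕ) * v) (p ^ (k + 1)) = 0 := by
  have hp0 : (0 : ℤ) < p := by exact_mod_cast hp.pos
  simp_rw [ssC_prime_pow _ hp, ssG_apply]
  rw [Finset.sum_sub_distrib]
  have hQ : ((p ^ k : ℕ) : ℤ) ≠ 0 := by exact_mod_cast (pow_pos hp.pos k).ne'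
  have hdiv : ∀ v : ℕ, ((p ^ k : ℕ) : ℤ) ∣ n + (p ^ k : ℕ) * v ↔ ((p ^ k : ℕ) : ℤ) ∣ n := by
    intro v
    exact dvd_add_left (dvd_mul_right _ _)
  by_cases h : ((p ^ k : ℕ) : ℤ) ∣ n
  · obtain ⟨w, hw⟩ := h
    have hd2 : ∀ v : ℕ, ((p ^ (k + 1) : ℕ) : ℤ) ∣ n + (p ^ k : ℕ) * v ↔ (p : ℤ) ∣ w + v := by
      intro v
      rw [hw, ← mul_add, pow_succ, Nat.cast_mul]
      exact mul_dvd_mul_iff_left hQ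
    simp only [hdiv, hd2]
    have hv : (((-w) % (p : ℤ)).toNat : ℤ) = (-w) % p :=
      Int.toNat_of_nonneg (Int.emod_nonneg _ hp0.ne')
    have hlt : (-w) % (p : ℤ) < p := Int.emod_lt_of_pos _ hp0
    rw [Finset.sum_eq_single (((-w) % (p : ℤ)).toNat)]
    · rw [if_pos]
      · rw [if_pos ⟨w, hw⟩]
        simp [pow_succ]
        ring
      · rw [hv]
        have h5 : (p : ℤ) ∣ -w - (-w) % p := Int.dvd_self_sub_emod
        rw [← dvd_neg]
        rwa [neg_add']
    · intro v hv1 hv2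
      rw [if_neg]
      intro hd
      apply hv2
      have hvp : (v : ℤ) < p := by exact_mod_cast Finset.mem_range.mp hv1
      have : (v : ℤ) = (-w) % p := by
        rw [← Int.emod_eq_of_lt (Int.natCast_nonneg v) hvp]
        apply Int.emod_emod_of_dvd _ dvd_rfl |>.symm.trans
        rw [Int.emod_emod_of_dvd _ dvd_rfl]
        apply Int.ModEq.symm
        rw [Int.modEq_iff_dvd]
        convert hd using 1
        ring
      omega
    · intro h6
      exact absurd (Finset.mem_range.mpr (by omega)) h6
  · have hd2 : ∀ v : ℕ, ¬ ((p ^ (k + 1) : ℕ) : ℤ) ∣ n + (p ^ k : ℕ) * v := by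
      intro v hv
      apply h
      rw [← hdiv v]
      refine dvd_trans ?_ hv
      exact_mod_cast pow_dvd_pow p (Nat.le_succ k)
    simp only [hdiv, hd2, h]
    simp

lemma ssC_vanish (n : ℤ) {p : ℕ} (hp : p.Prime) (k : ℕ) (P : ℕ → Prop) [DecidablePred P]
    (hP : ∀ u v, P (u + p ^ k * v) ↔ P u) :
    ∑ r ∈ (Finset.range (p ^ (k + 1))).filter P, ssC (n + r) (p ^ (k + 1)) = 0 := by
  rw [Finset.sum_filter]
  conv_lhs => rw [show Finset.range (p ^ (k + 1)) = Finset.range (p ^ k * p) by rw [pow_succ]]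
  rw [ss_range_mul, Finset.sum_comm]
  apply Finset.sum_eq_zero
  intro u _
  simp only [hP]
  by_cases h : P u
  · simp only [h, if_true]
    have := ssC_inner (n + u) hp k
    rw [← this]
    apply Finset.sum_congr rfl
    intro v _
    push_cast
    congr 2
    ring
  · simp [h]

lemma ssR_of_dvd (m : ℕ) (s : ℤ) (hs : IsCoprime s (m : ℤ)) {q : ℕ} (hq : 0 < q) (hqm : q ∣ m) :
    ∃ r : ℕ, ssR m s q = {r} ∧ (q : ℤ) ∣ r - s := by
  have hq0 : (0 : ℤ) < q := by exact_mod_cast hq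
  have hv : ((s % (q : ℤ)).toNat : ℤ) = s % q :=
      Int.toNat_of_nonneg (Int.emod_nonneg _ hq0.ne')
  have hlt : s % (q : ℤ) < q := Int.emod_lt_of_pos _ hq0
  refine ⟨(s % (q : ℤ)).toNat, ?_, ?_⟩
  · ext r
    simp only [ssR, Finset.mem_filter, Finset.mem_range, Finset.mem_singleton,
      Nat.gcd_eq_left hqm]
    constructor
    · rintro ⟨h1, _, h2⟩
      have h1' : (r : ℤ) < q := by exact_mod_cast h1
      have : (r : ℤ) = s % q := by
        rw [← h2, Int.emod_eq_of_lt (Int.natCast_nonneg _) h1']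
      omega
    · rintro rfl
      refine ⟨by omega, ?_, ?_⟩
      · rw [← Nat.isCoprime_iff_coprime, hv]
        have h1 : IsCoprime s (q : ℤ) :=
          hs.of_isCoprime_of_dvd_right (Int.natCast_dvd_natCast.mpr hqm)
        rw [Int.isCoprime_iff_gcd_eq_one] at h1 ⊢
        rw [← h1, Int.gcd_emod]
      · rw [hv]; exact Int.mod_modEq _ _
  · rw [hv, ← dvd_neg, neg_sub]
    exact Int.dvd_self_sub_emod

lemma ssF_of_dvd (m : ℕ) (s₁ s₂ h : ℤ) (hs₁ : IsCoprime s₁ (m : ℤ)) (hs₂ : IsCoprime s₂ (m : ℤ))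
    {q : ℕ} (hq : 0 < q) (hqm : q ∣ m) :
    ssF m s₁ s₂ h q = (ssC (s₁ + s₂ - h) q : ℤ) := by
  obtain ⟨r₁, h1, h1'⟩ := ssR_of_dvd m s₁ hs₁ hq hqm
  obtain ⟨r₂, h2, h2'⟩ := ssR_of_dvd m s₂ hs₂ hq hqm
  have p3 : (Nat.totient q : ℝ) ≠ 0 := by exact_mod_cast (Nat.totient_pos.mpr hq).ne'
  rw [ssF, ssT, h1, h2, Nat.gcd_eq_left hqm, div_self p3]
  simp only [Finset.sum_singleton, one_pow, one_mul]
  congr 1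
  apply ssC_congr
  have h3 := dvd_add h1' h2'
  have h4 : (r₁ - s₁ + (r₂ - s₂) : ℤ) = r₁ + r₂ - h - (s₁ + s₂ - h) := by ring
  rwa [h4] at h3

lemma ssF_big (m : ℕ) (s₁ s₂ h : ℤ) {p : ℕ} (hp : p.Prime) {k : ℕ} (hk : 1 ≤ k)
    (hd : ¬ p ^ (k + 1) ∣ m) : ssF m s₁ s₂ h (p ^ (k + 1)) = 0 := by
  have hg : Nat.gcd (p ^ (k + 1)) m ∣ p ^ k := by
    obtain ⟨j, hj, hj'⟩ := (Nat.dvd_prime_pow hp).mp (Nat.gcd_dvd_left (p ^ (k + 1)) m)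
    rw [hj']
    apply pow_dvd_pow
    rcases Nat.lt_or_ge k j with h1 | h1
    · exfalso
      have : j = k + 1 := by omega
      subst this
      exact hd (hj' ▸ Nat.gcd_dvd_right _ _)
    · exact h1
  rw [ssF, ssT]
  rw [Finset.sum_eq_zero, Int.cast_zero, mul_zero]
  intro r₁ _
  have := ssC_vanish (r₁ - h) hp k (fun r => Nat.Coprime r (p ^ (k + 1)) ∧
    (r : ℤ) ≡ s₂ [ZMOD (Nat.gcd (p ^ (k + 1)) m : ℤ)]) ?_
  · rw [← this]
    unfold ssR
    apply Finset.sum_congr rfl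
    intro r _
    congr 2
    ring
  · intro u v
    have e1 : Nat.Coprime (u + p ^ k * v) (p ^ (k + 1)) ↔ Nat.Coprime u (p ^ (k + 1)) := by
      rw [Nat.coprime_pow_right_iff (by omega), Nat.coprime_pow_right_iff (by omega)]
      obtain ⟨j, rfl⟩ := Nat.exists_eq_add_of_le hk
      rw [pow_add, pow_one, mul_assoc]
      simp
    have e2 : ((u + p ^ k * v : ℕ) : ℤ) ≡ s₂ [ZMOD (Nat.gcd (p ^ (k + 1)) m : ℤ)] ↔
       (u : ℤ) ≡ s₂ [ZMOD (Nat.gcd (p ^ (k + 1)) m : ℤ)] := by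
      have : ((u + p ^ k * v : ℕ) : ℤ) ≡ u [ZMOD (Nat.gcd (p ^ (k + 1)) m : ℤ)] := by
        apply Int.ModEq.symm
        rw [Int.modEq_iff_dvd]
        push_cast
        rw [add_sub_cancel_left]
        exact dvd_mul_of_dvd_left (by exact_mod_cast hg) _
      exact ⟨fun h => this.symm.trans h, fun h => this.trans h⟩
    rw [e1, e2]

lemma ssF_prime (m : ℕ) (s₁ s₂ h : ℤ) {p : ℕ} (hp : p.Prime)
    (hd : ¬ p ∣ m) : ssF m s₁ s₂ h p = (ssC (-h) p : ℤ) / ((p : ℝ) - 1) ^ 2 := by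
  have hg : Nat.gcd p m = 1 := (Nat.Prime.coprime_iff_not_dvd hp).mpr hd
  have hR : ∀ s, ssR m s p = (Finset.range p).erase 0 := by
    intro s
    ext r
    simp only [ssR, Finset.mem_filter, Finset.mem_range, Finset.mem_erase, hg, Nat.cast_one,
      Int.modEq_one, and_true]
    constructor
    · rintro ⟨h1, h2⟩
      refine ⟨?_, h1⟩
      rintro rfl
      rw [Nat.coprime_zero_left] at h2
      exact hp.one_lt.ne' h2
    · rintro ⟨h1, h2⟩
      exact ⟨h2, (Nat.coprime_of_lt_prime h1 h2 hp).symm⟩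
  have hs : ∀ n : ℤ, ∑ r ∈ (Finset.range p).erase 0, ssC (n + r) p = - ssC n p := by
    intro n
    have h1 := ssC_inner n hp 0
    have h2 := Finset.add_sum_erase (Finset.range p) (fun r : ℕ => ssC (n + r) p)
      (Finset.mem_range.mpr hp.pos)
    simp only [pow_zero, Nat.cast_one, one_mul, zero_add, pow_one] at h1
    rw [h1] at h2
    simp only [Nat.cast_zero, add_zero] at h2
    linarith
  have hT : ssT m s₁ s₂ h p = ssC (-h) p := by
    rw [ssT, hR, hR]
    have e1 : ∀ r₁ : ℕ, ∑ r₂ ∈ (Finset.range p).erase 0, ssC ((r₁ : ℤ) + (r₂ : ℤ) - h) p =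
        - ssC (-h + r₁) p := by
      intro r₁
      rw [← hs]
      apply Finset.sum_congr rfl
      intro r _
      congr 2
      ring
    simp_rw [e1]
    rw [Finset.sum_neg_distrib, hs, neg_neg]
  rw [ssF, hT, hg, Nat.totient_prime hp, Nat.cast_sub hp.one_le]
  simp
  ring

/-- local factor -/
noncomputable def ssL (m : ℕ) (s₁ s₂ : ℤ) (h : ℕ) (p : ℕ) : ℝ :=
  if p ∣ m then (ssG (s₁ + s₂ - h) (p ^ m.factorization p) : ℤ)
  else if p ∣ h then 1 + 1 / ((p : ℝ) - 1) else 1 - 1 / ((p : ℝ) - 1) ^ 2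

lemma ssF_support (m : ℕ) (hm : 0 < m) (s₁ s₂ h : ℤ) {p : ℕ} (hp : p.Prime) (e : ℕ)
    (he : e ∉ Finset.range (max 1 (m.factorization p) + 1)) : ssF m s₁ s₂ h (p ^ e) = 0 := by
  simp only [Finset.mem_range, not_lt] at he
  obtain ⟨k, rfl⟩ : ∃ k, e = k + 1 := ⟨e - 1, by omega⟩
  apply ssF_big m s₁ s₂ h hp (by omega)
  rw [hp.pow_dvd_iff_le_factorization hm.ne']
  omega

lemma ssF_prime_val (m : ℕ) (s₁ s₂ : ℤ) (h : ℕ) {p : ℕ} (hp : p.Prime)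
    (hd : ¬ p ∣ m) : ssF m s₁ s₂ h p =
      if p ∣ h then 1 / ((p : ℝ) - 1) else - 1 / ((p : ℝ) - 1) ^ 2 := by
  rw [ssF_prime m s₁ s₂ h hp hd]
  have := ssC_prime_pow (-h) hp 0
  rw [zero_add, pow_one, pow_zero] at this
  rw [this]
  simp only [ssG_apply, dvd_neg, Int.natCast_dvd_natCast]
  have : (p : ℝ) - 1 ≠ 0 := by
    have : (1 : ℝ) < p := by exact_mod_cast hp.one_lt
    linarith
  by_cases h1 : p ∣ h
  · simp [h1]
    field_simp
  · simp [h1]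

lemma ssF_tsum (m : ℕ) (hm : 0 < m) (s₁ s₂ : ℤ) (h : ℕ)
    (hs₁ : IsCoprime s₁ (m : ℤ)) (hs₂ : IsCoprime s₂ (m : ℤ)) {p : ℕ} (hp : p.Prime) :
    ∑' e : ℕ, ssF m s₁ s₂ h (p ^ e) = ssL m s₁ s₂ h p := by
  rw [tsum_eq_sum (fun e he => ssF_support m hm s₁ s₂ h hp e he)]
  unfold ssL
  by_cases hd : p ∣ m
  · rw [if_pos hd]
    have h1 : 1 ≤ m.factorization p := (hp.dvd_iff_one_le_factorization hm.ne').mp hd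
    rw [max_eq_right h1, ← ssC_sum, Nat.sum_divisors_prime_pow hp]
    push_cast
    apply Finset.sum_congr rfl
    intro e he
    apply ssF_of_dvd m s₁ s₂ h hs₁ hs₂ (pow_pos hp.pos _)
    rw [hp.pow_dvd_iff_le_factorization hm.ne']
    have := Finset.mem_range.mp he
    omega
  · rw [if_neg hd, Nat.factorization_eq_zero_of_not_dvd hd]
    simp only [zero_le, sup_of_le_left]
    rw [Finset.sum_range_succ, Finset.sum_range_one, pow_zero, pow_one, ssF_one,
      ssF_prime_val m s₁ s₂ h hp hd]
    split_ifs <;> ring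

lemma ss_summable_of_mult (f b : ℕ → ℝ) (hf0 : f 0 = 0) (hf1 : f 1 = 1)
    (hmul : ∀ {a b : ℕ}, Nat.Coprime a b → f (a * b) = f a * f b)
    (hs : ∀ {p : ℕ}, p.Prime → Summable (fun n : ℕ => ‖f (p ^ n)‖))
    (hb0 : ∀ p, 0 ≤ b p) (hb : Summable b)
    (hle : ∀ p : ℕ, p.Prime → ∑' n : ℕ, ‖f (p ^ n)‖ ≤ 1 + b p) :
    Summable (fun n => ‖f n‖) := by
  apply summable_of_sum_range_le (c := Real.exp (∑' p, b p)) (fun n => norm_nonneg _)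
  intro N
  have H := EulerProduct.summable_and_hasSum_smoothNumbers_prod_primesBelow_tsum
    (f := fun n => ‖f n‖) (by simp [hf1]) (fun {a b} hab => by simp [hmul hab])
    (fun {p} hp => by simpa using hs hp) N
  have h1 : ∑ n ∈ Finset.range N, ‖f n‖ ≤ ∑' n : N.smoothNumbers, ‖f n‖ := by
    have hsub : ∑ n ∈ Finset.range N, ‖f n‖ = ∑ n ∈ (Finset.range N).erase 0, ‖f n‖ := by
      symm
      apply Finset.sum_erase
      simp [hf0]
    rw [hsub]
    have hmem : ∀ n ∈ (Finset.range N).erase 0, n ∈ N.smoothNumbers := by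
      intro n hn
      rw [Finset.mem_erase, Finset.mem_range] at hn
      exact Nat.mem_smoothNumbers_of_lt (Nat.pos_of_ne_zero hn.1) hn.2
    rw [← Finset.sum_subtype_of_mem (fun n => ‖f n‖) hmem]
    exact H.2.summable.sum_le_tsum _ (fun _ _ => norm_nonneg _)
  refine h1.trans ?_
  rw [H.2.tsum_eq]
  calc ∏ p ∈ N.primesBelow, ∑' n : ℕ, ‖f (p ^ n)‖ ≤ ∏ p ∈ N.primesBelow, Real.exp (b p) := by
        apply Finset.prod_le_prod
        · intro p _; exact tsum_nonneg fun _ => norm_nonneg _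
        · intro p hp
          refine (hle p (Nat.prime_of_mem_primesBelow hp)).trans ?_
          rw [add_comm]; exact Real.add_one_le_exp _
    _ = Real.exp (∑ p ∈ N.primesBelow, b p) := (Real.exp_sum _ _).symm
    _ ≤ Real.exp (∑' p, b p) := Real.exp_le_exp.mpr (hb.sum_le_tsum _ (fun _ _ => hb0 _))

lemma ss_summable_sq : Summable (fun n : ℕ => 1 / ((n : ℝ) - 1) ^ 2) := by
  rw [← summable_nat_add_iff 1]
  simpa using (Real.summable_one_div_nat_pow (p := 2)).mpr (by norm_num)

lemma ssF_summable (m : ℕ) (hm : 0 < m) (s₁ s₂ : ℤ) (h : ℕ) (hh : 0 < h) :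
    Summable (fun q => ‖ssF m s₁ s₂ h q‖) := by
  have hfin : ∀ {p : ℕ}, p.Prime → ∀ e ∉ Finset.range (max 1 (m.factorization p) + 1),
      ‖ssF m s₁ s₂ h (p ^ e)‖ = 0 := by
    intro p hp e he
    rw [ssF_support m hm s₁ s₂ h hp e he, norm_zero]
  apply ss_summable_of_mult _ (fun p => 1 / ((p : ℝ) - 1) ^ 2 +
    if p ∈ (m * h).divisors then ∑' n : ℕ, ‖ssF m s₁ s₂ h (p ^ n)‖ else 0)
    (ssF_zero _ _ _ _) (ssF_one _ _ _ _) (fun hab => ssF_mul m s₁ s₂ h hab)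
  · intro p hp
    exact summable_of_ne_finset_zero (hfin hp)
  · intro p
    have : 0 ≤ ∑' n : ℕ, ‖ssF m s₁ s₂ h (p ^ n)‖ := tsum_nonneg fun _ => norm_nonneg _
    split_ifs <;> positivity
  · apply ss_summable_sq.add
    apply summable_of_ne_finset_zero (s := (m * h).divisors)
    intro p hp
    rw [if_neg hp]
  · intro p hp
    split_ifs with hd
    · have : 0 ≤ 1 / ((p : ℝ) - 1) ^ 2 := by positivity
      linarith
    · rw [Nat.mem_divisors] at hd
      have hd1 : ¬ p ∣ m := fun h' => hd ⟨dvd_mul_of_dvd_left h' _, by positivity⟩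
      have hd2 : ¬ p ∣ h := fun h' => hd ⟨dvd_mul_of_dvd_right h' _, by positivity⟩
      rw [tsum_eq_sum (hfin hp), Nat.factorization_eq_zero_of_not_dvd hd1]
      simp only [zero_le, sup_of_le_left]
      rw [Finset.sum_range_succ, Finset.sum_range_one, pow_zero, pow_one, ssF_one,
        ssF_prime_val m s₁ s₂ h hp hd1, if_neg hd2]
      simp

lemma ss_hasProd (m : ℕ) (hm : 0 < m) (s₁ s₂ : ℤ) (h : ℕ) (hh : 0 < h)
    (hs₁ : IsCoprime s₁ (m : ℤ)) (hs₂ : IsCoprime s₂ (m : ℤ)) :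
    HasProd (fun p : Nat.Primes => ssL m s₁ s₂ h p) (∑' q, ssF m s₁ s₂ h q) := by
  have := EulerProduct.eulerProduct_hasProd (ssF_one m s₁ s₂ h)
    (fun hab => ssF_mul m s₁ s₂ h hab) (ssF_summable m hm s₁ s₂ h hh) (ssF_zero _ _ _ _)
  have e : (fun p : Nat.Primes => ssL m s₁ s₂ h p) =
      fun p : Nat.Primes => ∑' e : ℕ, ssF m s₁ s₂ h ((p : ℕ) ^ e) := by
    funext p
    exact (ssF_tsum m hm s₁ s₂ h hs₁ hs₂ p.2).symm
  rw [e]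
  exact this

lemma ss_series (m : ℕ) (hm : 0 < m) (s₁ s₂ h : ℤ) :
    singSeries m s₁ s₂ h = (((∑' q, ssF m s₁ s₂ h q) / (Nat.totient m : ℝ) ^ 2 : ℝ) : ℂ) := by
  unfold singSeries
  simp_rw [ss_term m hm]
  rw [← tsum_div_const, Complex.ofReal_tsum]

lemma ss_part1 (m : ℕ) (hm : 0 < m) (s₁ s₂ : ℤ)
    (hs₁ : IsCoprime s₁ (m : ℤ)) (hs₂ : IsCoprime s₂ (m : ℤ)) (h : ℕ) (hh : 0 < h)
    (hn : ¬((h : ℤ) ≡ s₁ + s₂ [ZMOD (m : ℤ)])) : singSeries m s₁ s₂ (h : ℤ) = 0 := by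
  have key : ∃ p : Nat.Primes, ssL m s₁ s₂ h p = 0 := by
    by_contra hcon
    push Not at hcon
    apply hn
    rw [Int.modEq_iff_dvd, Int.natCast_dvd, Nat.dvd_iff_prime_pow_dvd_dvd]
    intro p k hp hk
    rcases Nat.eq_zero_or_pos k with rfl | hk0
    · simp
    have hpm : p ∣ m := (dvd_pow_self p hk0.ne').trans hk
    have h1 := hcon ⟨p, hp⟩
    simp only [ssL, hpm, if_true, ssG_apply] at h1
    rw [← Int.natCast_dvd]
    have h2 : ((p ^ m.factorization p : ℕ) : ℤ) ∣ s₁ + s₂ - h := by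
      by_contra h3
      rw [if_neg h3] at h1
      simp at h1
    refine dvd_trans (Int.natCast_dvd_natCast.mpr (pow_dvd_pow p ?_)) h2
    exact (hp.pow_dvd_iff_le_factorization hm.ne').mp hk
  rw [ss_series m hm, (ss_hasProd m hm s₁ s₂ h hh hs₁ hs₂).unique
    (hasProd_zero_of_exists_eq_zero key)]
  simp

lemma ss_hasProd_fin (S : Finset ℕ) (hS : ∀ p ∈ S, p.Prime) (g : ℕ → ℝ) :
    HasProd (fun p : Nat.Primes => if (p : ℕ) ∈ S then g p else 1) (∏ p ∈ S, g p) := by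
  have h1 := hasProd_prod_of_ne_finset_one (L := SummationFilter.unconditional _)
    (f := fun p : Nat.Primes => if (p : ℕ) ∈ S then g p else 1)
    (s := S.subtype Nat.Prime) (fun p hp => by
      rw [if_neg]; intro h; exact hp (Finset.mem_subtype.mpr h))
  convert h1 using 1
  rw [← Finset.prod_subtype_of_mem g hS]
  apply Finset.prod_congr rfl
  intro p hp
  rw [if_pos (Finset.mem_subtype.mp hp)]

lemma ss_multipliable (m h : ℕ) : Multipliable (fun p : Nat.Primes =>
    if ¬(p : ℕ) ∣ h ∧ ¬(p : ℕ) ∣ m then 1 - 1 / (((p : ℕ) : ℝ) - 1) ^ 2 else 1) := by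
  have h1 : Summable (fun p : Nat.Primes => 1 / (((p : ℕ) : ℝ) - 1) ^ 2) :=
    ss_summable_sq.comp_injective (i := fun p : Nat.Primes => (p : ℕ)) Subtype.val_injective
  have h2 := multipliable_one_add_of_summable (R := ℝ) (f := fun p : Nat.Primes =>
    if ¬(p : ℕ) ∣ h ∧ ¬(p : ℕ) ∣ m then - (1 / (((p : ℕ) : ℝ) - 1) ^ 2) else 0) (by
      apply Summable.of_nonneg_of_le (fun _ => norm_nonneg _) _ h1
      intro p
      split_ifs
      · simp
      · simp; positivity)
  refine h2.congr ?_
  intro p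
  split_ifs <;> ring

lemma ss_part2 (m : ℕ) (hm : 0 < m) (s₁ s₂ : ℤ)
    (hs₁ : IsCoprime s₁ (m : ℤ)) (hs₂ : IsCoprime s₂ (m : ℤ)) (h : ℕ) (hh : 0 < h)
    (hn : ((h : ℤ) ≡ s₁ + s₂ [ZMOD (m : ℤ)])) :
      singSeries m s₁ s₂ (h : ℤ) =
        (((m : ℝ) / (Nat.totient m : ℝ) ^ 2 *
          (∏' p : Nat.Primes, if ¬(p : ℕ) ∣ h ∧ ¬(p : ℕ) ∣ m then
            1 - 1 / (((p : ℕ) : ℝ) - 1) ^ 2 else 1) *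
          ∏ p ∈ h.primeFactors.filter (fun p => ¬p ∣ m),
            (1 + 1 / ((p : ℝ) - 1)) : ℝ) : ℂ) := by
  have h1 := ss_hasProd_fin m.primeFactors (fun p hp => Nat.prime_of_mem_primeFactors hp)
    (fun p => (p : ℝ) ^ m.factorization p)
  have h2 := ss_hasProd_fin (h.primeFactors.filter (fun p => ¬p ∣ m))
    (fun p hp => Nat.prime_of_mem_primeFactors (Finset.mem_filter.mp hp).1)
    (fun p => (1 + 1 / ((p : ℝ) - 1)))
  have h3 := (h1.mul (ss_multipliable m h).hasProd).mul h2
  have hmv : ∏ p ∈ m.primeFactors, (p : ℝ) ^ m.factorization p = m := by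
    conv_rhs => rw [← Nat.prod_factorization_pow_eq_self hm.ne']
    rw [Finsupp.prod, Nat.support_factorization]
    push_cast
    rfl
  rw [hmv] at h3
  rw [Int.modEq_iff_dvd] at hn
  have h4 := ss_hasProd m hm s₁ s₂ h hh hs₁ hs₂
  have h5 : (∑' q, ssF m s₁ s₂ h q) = _ := h4.unique (by
    convert h3 using 2 with p
    have hp := p.2
    by_cases hd : (p : ℕ) ∣ m
    · have : ((((p : ℕ) ^ m.factorization p : ℕ)) : ℤ) ∣ s₁ + s₂ - h :=
        dvd_trans (Int.natCast_dvd_natCast.mpr (Nat.ordProj_dvd m p)) hn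
      simp only [ssL, hd, if_true, ssG_apply, this, Nat.mem_primeFactors, hp]
      simp [hd, hm.ne']
    · by_cases hd2 : (p : ℕ) ∣ h
      · simp [ssL, hd, hd2, hp, hh.ne']
      · simp [ssL, hd, hd2])
  rw [ss_series m hm, h5]
  congr 1
  ring

/-- comparison factor -/
noncomputable def ssK (n : ℕ) : ℝ := if 3 ≤ n then 1 - 1 / ((n : ℝ) - 1) ^ 2 else 1

lemma ssK_nonneg (n : ℕ) : 0 ≤ ssK n := by
  unfold ssK
  split_ifs with h
  · have : (3 : ℝ) ≤ n := by exact_mod_cast h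
    have h2 : 1 / ((n : ℝ) - 1) ^ 2 ≤ 1 := by
      rw [div_le_one (by nlinarith)]; nlinarith
    linarith
  · norm_num

lemma ssK_le_one (n : ℕ) : ssK n ≤ 1 := by
  unfold ssK
  split_ifs with h
  · have : 0 ≤ 1 / ((n : ℝ) - 1) ^ 2 := by positivity
    linarith
  · norm_num

lemma ssK_prod (N : ℕ) : ∏ n ∈ Finset.range (N + 3), ssK n = ((N : ℝ) + 2) / (2 * (N + 1)) := by
  induction N with
  | zero => simp [Finset.prod_range_succ, ssK]
  | succ N ih =>
    rw [show N + 1 + 3 = (N + 3) + 1 by ring, Finset.prod_range_succ, ih, ssK, if_pos (by omega)]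
    push_cast
    have h1 : (N : ℝ) + 1 ≠ 0 := by positivity
    have h2 : (N : ℝ) + 2 ≠ 0 := by positivity
    have h3 : (N : ℝ) + 3 - 1 = N + 2 := by ring
    have h4 : (N : ℝ) + 1 + 1 = N + 2 := by ring
    rw [h3, h4]
    field_simp
    ring

lemma ssK_finset (S : Finset ℕ) : 1 / 2 ≤ ∏ n ∈ S, ssK n := by
  obtain ⟨N, hN⟩ := S.exists_nat_subset_range
  have hsub : S ⊆ Finset.range (N + 3) := hN.trans (Finset.range_mono (by omega))
  calc (1 / 2 : ℝ) ≤ ((N : ℝ) + 2) / (2 * (N + 1)) := by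
        rw [div_le_div_iff₀ (by norm_num) (by positivity)]; linarith
    _ = ∏ n ∈ Finset.range (N + 3), ssK n := (ssK_prod N).symm
    _ ≤ ∏ n ∈ Finset.range (N + 3), if n ∈ S then ssK n else 1 := by
        apply Finset.prod_le_prod
        · intro n _; exact ssK_nonneg n
        · intro n _
          split_ifs
          · exact le_rfl
          · exact ssK_le_one n
    _ = ∏ n ∈ S, ssK n := by
        rw [Finset.prod_ite_mem, Finset.inter_eq_right.mpr hsub]

lemma ss_tprod_ge (m h : ℕ) (hm : Even m) : 1 / 2 ≤ ∏' p : Nat.Primes,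
    if ¬(p : ℕ) ∣ h ∧ ¬(p : ℕ) ∣ m then 1 - 1 / (((p : ℕ) : ℝ) - 1) ^ 2 else 1 := by
  refine ge_of_tendsto (ss_multipliable m h).hasProd (Filter.Eventually.of_forall ?_)
  intro S
  refine (ssK_finset (S.map ⟨fun p : Nat.Primes => (p : ℕ), Subtype.val_injective⟩)).trans ?_
  rw [Finset.prod_map]
  apply Finset.prod_le_prod
  · intro p _; exact ssK_nonneg _
  · intro p _
    change ssK (p : ℕ) ≤ _
    split_ifs with hc
    · have h2 : (p : ℕ) ≠ 2 := by
        intro h'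
        exact hc.2 (h' ▸ hm.two_dvd)
      have : 3 ≤ (p : ℕ) := by have := p.2.two_le; omega
      rw [ssK, if_pos this]
    · exact ssK_le_one _

lemma ss_fin_ge (m h : ℕ) : 1 ≤ ∏ p ∈ h.primeFactors.filter (fun p => ¬p ∣ m),
            (1 + 1 / ((p : ℝ) - 1)) := by
  apply Finset.one_le_prod
  intro p hp
  have h1 := (Nat.prime_of_mem_primeFactors (Finset.mem_filter.mp hp).1).one_lt
  have : (0 : ℝ) < (p : ℝ) - 1 := by
    have : (1 : ℝ) < p := by exact_mod_cast h1
    linarith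
  have : 0 ≤ 1 / ((p : ℝ) - 1) := by positivity
  linarith

lemma ss_part3 (m : ℕ) (hm : 0 < m) (he : Even m) (h : ℕ) (hh : 0 < h) :
    ∃ V : ℝ, (m : ℝ) / (Nat.totient m : ℝ) ^ 2 / 2 ≤ V ∧
    ∀ s₁ s₂ : ℤ, IsCoprime s₁ (m : ℤ) → IsCoprime s₂ (m : ℤ) →
      singSeries m s₁ s₂ (h : ℤ) = if ((h : ℤ) ≡ s₁ + s₂ [ZMOD (m : ℤ)]) then (V : ℂ) else 0 := by
  refine ⟨(m : ℝ) / (Nat.totient m : ℝ) ^ 2 *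
          (∏' p : Nat.Primes, if ¬(p : ℕ) ∣ h ∧ ¬(p : ℕ) ∣ m then
            1 - 1 / (((p : ℕ) : ℝ) - 1) ^ 2 else 1) *
          ∏ p ∈ h.primeFactors.filter (fun p => ¬p ∣ m),
            (1 + 1 / ((p : ℝ) - 1)), ?_, fun s₁ s₂ hs₁ hs₂ => ?_⟩
  rotate_left
  · split_ifs with hc
    · exact ss_part2 m hm s₁ s₂ hs₁ hs₂ h hh hc
    · exact ss_part1 m hm s₁ s₂ hs₁ hs₂ h hh hc
  · have h1 := ss_tprod_ge m h he
    have h2 := ss_fin_ge m h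
    have h3 : 0 ≤ (m : ℝ) / (Nat.totient m : ℝ) ^ 2 := by positivity
    calc (m : ℝ) / (Nat.totient m : ℝ) ^ 2 / 2 = (m : ℝ) / (Nat.totient m : ℝ) ^ 2 * (1 / 2) * 1 := by ring
      _ ≤ _ := by gcongr

/-- Product expansion of the singular series: `𝔖_{s₁s₂}(h) = 0` unless
`h ≡ s₁+s₂ (mod m)`, in which case
`𝔖_{s₁s₂}(h) = (m/φ(m)²)·∏_{p ∤ h, p ∤ m}(1 - 1/(p-1)²)·∏_{p ∣ h, p ∤ m}(1 + 1/(p-1))`;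
moreover if `m` is even then `𝔖_S(h) ≥ c > 0` for all even `h ≡ s₁+s₂ (mod m)`,
with `c` depending only on `m`. -/
theorem singular_series_product (m : ℕ) (hm : 0 < m) (s₁ s₂ : ℤ)
    (hs₁ : IsCoprime s₁ (m : ℤ)) (hs₂ : IsCoprime s₂ (m : ℤ)) :
    (∀ h : ℕ, 0 < h → ¬((h : ℤ) ≡ s₁ + s₂ [ZMOD (m : ℤ)]) →
      singSeries m s₁ s₂ (h : ℤ) = 0) ∧
    (∀ h : ℕ, 0 < h → ((h : ℤ) ≡ s₁ + s₂ [ZMOD (m : ℤ)]) →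
      singSeries m s₁ s₂ (h : ℤ) =
        (((m : ℝ) / (Nat.totient m : ℝ) ^ 2 *
          (∏' p : Nat.Primes, if ¬(p : ℕ) ∣ h ∧ ¬(p : ℕ) ∣ m then
            1 - 1 / (((p : ℕ) : ℝ) - 1) ^ 2 else 1) *
          ∏ p ∈ h.primeFactors.filter (fun p => ¬p ∣ m),
            (1 + 1 / ((p : ℝ) - 1)) : ℝ) : ℂ)) ∧
    (Even m → ∃ c : ℝ, 0 < c ∧ ∀ t₁ t₂ : ℤ, IsCoprime t₁ (m : ℤ) → IsCoprime t₂ (m : ℤ) →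
      ∀ h : ℕ, 0 < h → Even h → ((h : ℤ) ≡ t₁ + t₂ [ZMOD (m : ℤ)]) →
        (singS m t₁ t₂ (h : ℤ)).im = 0 ∧ c ≤ (singS m t₁ t₂ (h : ℤ)).re) := by

  refine ⟨ss_part1 m hm s₁ s₂ hs₁ hs₂, ss_part2 m hm s₁ s₂ hs₁ hs₂, fun he => ?_⟩
  have hpos : 0 < (m : ℝ) / (Nat.totient m : ℝ) ^ 2 := by
    have : 0 < Nat.totient m := Nat.totient_pos.mpr hm
    positivity
  refine ⟨_, hpos, fun t₁ t₂ ht₁ ht₂ h hh _ hc => ?_⟩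
  obtain ⟨V, hV, hval⟩ := ss_part3 m hm he h hh
  unfold singS
  rw [hval t₁ t₁ ht₁ ht₁, hval t₁ t₂ ht₁ ht₂, hval t₂ t₂ ht₂ ht₂, if_pos hc]
  constructor
  · split_ifs <;> simp
  · split_ifs <;> simp <;> linarith
end

section
/- Let υ, ℓ' ≥ 1 be integers and G = (ℤ/2^υℤ) × (ℤ/2^{ℓ'}ℤ). (i) If υ ≥ 2 and ℓ' ≥ 2, then every element of order 2 in G is a square in G (i.e. of the form 2g for some g ∈ G). (ii) Suppose υ = 1 and ℓ' ≥ ℓ ≥ 2; let A, B, C be the three elements of order 2 in G and let J ∈ G be an element of order 2^ℓ. If at least three of the four elements J, J+A, J+B, J+C are not squares in G, then ℓ' = ℓ. -/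
theorem even_of_smul (m k : ℕ) (hk : k < m) (b : ZMod (2 ^ m)) (h : (2 ^ k) • b = 0) :
    ∃ c, b = c + c := by
  have : NeZero (2 ^ m) := ⟨by positivity⟩
  have hb : ((b.val : ℕ) : ZMod (2 ^ m)) = b := ZMod.natCast_zmod_val b
  have h1 : ((2 ^ k * b.val : ℕ) : ZMod (2 ^ m)) = 0 := by
    rw [← h, nsmul_eq_mul]; push_cast; rw [hb]
  rw [ZMod.natCast_eq_zero_iff] at h1
  have h2 : 2 ^ k * 2 ∣ 2 ^ k * b.val := by
    refine dvd_trans ?_ h1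
    rw [← pow_succ]; exact pow_dvd_pow 2 hk
  have h3 : 2 ∣ b.val := Nat.dvd_of_mul_dvd_mul_left (by positivity) h2
  obtain ⟨c, hc⟩ := h3
  refine ⟨(c : ZMod (2 ^ m)), ?_⟩
  rw [← hb, hc]; push_cast; ring

theorem unique_two (m : ℕ) (y z : ZMod (2 ^ m)) (hy : 2 • y = 0) (hz : 2 • z = 0)
    (hy0 : y ≠ 0) (hz0 : z ≠ 0) : y = z := by
  have : NeZero (2 ^ m) := ⟨by positivity⟩
  have key : ∀ y : ZMod (2 ^ m), 2 • y = 0 → y ≠ 0 → 2 * y.val = 2 ^ m := by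
    intro y hy hy0
    have hb : ((y.val : ℕ) : ZMod (2 ^ m)) = y := ZMod.natCast_zmod_val y
    have h1 : ((2 * y.val : ℕ) : ZMod (2 ^ m)) = 0 := by
      rw [← hy, nsmul_eq_mul]; push_cast; rw [hb]
    rw [ZMod.natCast_eq_zero_iff] at h1
    have hlt := ZMod.val_lt y
    have hpos : y.val ≠ 0 := by rwa [Ne, ZMod.val_eq_zero]
    obtain ⟨c, hc⟩ := h1
    have : c = 1 := by
      have : c < 2 := by
        by_contra hcc
        have : 2 ^ m * 2 ≤ 2 ^ m * c := Nat.mul_le_mul_left _ (by omega)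
        omega
      have : c ≠ 0 := by rintro rfl; omega
      omega
    rw [hc, this, mul_one]
  apply ZMod.val_injective
  have := key y hy hy0
  have := key z hz hz0
  omega

/-- In `G = (ℤ/2^υℤ) × (ℤ/2^ℓ'ℤ)`:
(i) if `υ, ℓ' ≥ 2` then every element of order 2 is a square (of the form `h + h`);
(ii) if `υ = 1` and `ℓ' ≥ ℓ ≥ 2`, `A, B, C` are the three (distinct) elements of order 2,
`J` has order `2^ℓ`, and at least three of `J, J+A, J+B, J+C` are not squares, then
`ℓ' = ℓ`. -/
theorem two_torsion_squares (υ ℓ' : ℕ) (hυ : 1 ≤ υ) (hℓ' : 1 ≤ ℓ') :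
    (2 ≤ υ → 2 ≤ ℓ' →
      ∀ g : ZMod (2 ^ υ) × ZMod (2 ^ ℓ'), addOrderOf g = 2 →
        ∃ h : ZMod (2 ^ υ) × ZMod (2 ^ ℓ'), g = h + h) ∧
    (∀ ℓ : ℕ, υ = 1 → 2 ≤ ℓ → ℓ ≤ ℓ' →
      ∀ A B C J : ZMod (2 ^ υ) × ZMod (2 ^ ℓ'),
        addOrderOf A = 2 → addOrderOf B = 2 → addOrderOf C = 2 →
        A ≠ B → A ≠ C → B ≠ C → addOrderOf J = 2 ^ ℓ →
        (∃ i j k : Fin 4, i ≠ j ∧ i ≠ k ∧ j ≠ k ∧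
          (¬∃ h, ![J, J + A, J + B, J + C] i = h + h) ∧
          (¬∃ h, ![J, J + A, J + B, J + C] j = h + h) ∧
          (¬∃ h, ![J, J + A, J + B, J + C] k = h + h)) →
        ℓ' = ℓ) := by
  constructor
  · intro h1 h2 g hg
    have h := addOrderOf_nsmul_eq_zero g
    rw [hg] at h
    obtain ⟨c, hc⟩ := even_of_smul υ 1 h1 g.1 (by simpa using congrArg Prod.fst h)
    obtain ⟨d, hd⟩ := even_of_smul ℓ' 1 h2 g.2 (by simpa using congrArg Prod.snd h)
    exact ⟨(c, d), Prod.ext hc hd⟩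
  · rintro ℓ rfl h2 hle A B C J hA hB hC hAB hAC hBC hJ ⟨i, j, k, hij, hik, hjk, hi, hj, hk⟩
    by_contra hne
    have hlt : ℓ < ℓ' := by omega
    have z2 : ∀ x : ZMod (2 ^ 1), x = 0 ∨ x = 1 := by decide
    have o11 : (1 : ZMod (2 ^ 1)) + 1 = 0 := by decide
    have hJ2 := addOrderOf_nsmul_eq_zero J
    rw [hJ] at hJ2
    obtain ⟨d, hd⟩ := even_of_smul ℓ' ℓ hlt J.2 (by simpa using congrArg Prod.snd hJ2)
    have tor : ∀ X : ZMod (2 ^ 1) × ZMod (2 ^ ℓ'), addOrderOf X = 2 →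
        2 • X.2 = 0 ∧ (X.1 = 0 → X.2 ≠ 0) ∧ (J.1 + X.1 = 0 → ∃ h, J + X = h + h) := by
      intro X hX
      have h := addOrderOf_nsmul_eq_zero X
      rw [hX] at h
      have h' : 2 • X.2 = 0 := by simpa using congrArg Prod.snd h
      refine ⟨h', ?_, ?_⟩
      · intro h1 h2
        have : X = 0 := Prod.ext h1 h2
        rw [this] at hX
        simp at hX
      · intro h1
        obtain ⟨e, he⟩ := even_of_smul ℓ' 1 (by omega) X.2 (by simpa using h')
        refine ⟨(0, d + e), Prod.ext (by simpa using h1) ?_⟩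
        simp only [Prod.snd_add]
        rw [hd, he]; abel
    have sJ : J.1 = 0 → ∃ h, J = h + h := fun h =>
      ⟨(0, d), Prod.ext (by simpa using h) hd⟩
    obtain ⟨A1, A2, A3⟩ := tor A hA
    obtain ⟨B1, B2, B3⟩ := tor B hB
    obtain ⟨C1, C2, C3⟩ := tor C hC
    have uAB := unique_two ℓ' A.2 B.2 A1 B1
    have uAC := unique_two ℓ' A.2 C.2 A1 C1
    have uBC := unique_two ℓ' B.2 C.2 B1 C1
    rw [Ne, Prod.ext_iff] at hAB hAC hBC
    have n01 : (0 : ZMod (2 ^ 1)) ≠ 1 := by decide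
    generalize hSJ : (∃ h, J = h + h) = SJ at *
    generalize hSA : (∃ h, J + A = h + h) = SA at *
    generalize hSB : (∃ h, J + B = h + h) = SB at *
    generalize hSC : (∃ h, J + C = h + h) = SC at *
    have two : (SJ ∧ SA) ∨ (SJ ∧ SB) ∨ (SJ ∧ SC) ∨ (SA ∧ SB) ∨ (SA ∧ SC) ∨ (SB ∧ SC) := by
      clear hSJ hSA hSB hSC hi hj hk tor hA hB hC hJ hJ2
      rcases z2 J.1 with hj | hj <;> rcases z2 A.1 with ha | ha <;>
        rcases z2 B.1 with hb | hb <;> rcases z2 C.1 with hc | hc <;>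
        simp only [hj, ha, hb, hc, o11, add_zero, zero_add, n01, n01.symm, true_and, false_and,
          not_true, not_false_iff, forall_const, true_imp_iff, false_imp_iff] at * <;>
        by_cases hA0 : A.2 = 0 <;> by_cases hB0 : B.2 = 0 <;> grind
    have val : ∀ i : Fin 4, (¬∃ h, ![J, J + A, J + B, J + C] i = h + h) →
        (i = 0 ∧ ¬ SJ) ∨ (i = 1 ∧ ¬ SA) ∨ (i = 2 ∧ ¬ SB) ∨ (i = 3 ∧ ¬ SC) := by
      intro i hi
      subst hSJ hSA hSB hSC
      fin_cases i
      · exact Or.inl ⟨rfl, hi⟩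
      · exact Or.inr (Or.inl ⟨rfl, hi⟩)
      · exact Or.inr (Or.inr (Or.inl ⟨rfl, hi⟩))
      · exact Or.inr (Or.inr (Or.inr ⟨rfl, hi⟩))
    have vi := val i hi
    have vj := val j hj
    have vk := val k hk
    clear hi hj hk val
    grind
end
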